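/- There is a constant C₀ > 1 such that for every C > C₀ the following holds. Let β > 0 and let H be an induced D₂-free 3-uniform hypergraph on n ≥ 4/β vertices satisfying β ≤ d(H) ≤ 1 − β. Set ξ = β²/16 and ε = (1/ξ)·(C/n)^{1/C}. Then there is a partition V(H) = X ∪ Y ∪ S such that |X|, |Y| ≥ ξn/10, |S| ≤ ξn/2, and (X,Y) is ε-homogeneous. -/

import Mathlib

open Finset

/-- A 3-uniform hypergraph is induced `D₂`-free if no 4 vertices span exactly 2 edges. -/
def InducedD2Free {V : Type} [Fintype V] [DecidableEq V] (E : Finset (Finset V)) : Prop :=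
  ∀ S : Finset V, S.card = 4 → (E.filter (fun e => e ⊆ S)).card ≠ 2

/-- The edge density of a 3-uniform hypergraph: `|E| / C(n,3)`. -/
noncomputable def densH {V : Type} [Fintype V] [DecidableEq V]
    (E : Finset (Finset V)) : ℝ :=
  (E.card : ℝ) / ((Fintype.card V).choose 3 : ℝ)

/-- `e(X,X,Y)`: the number of edges with two vertices in `X` and one vertex in `Y`. -/
def eXXY {V : Type} [DecidableEq V] (E : Finset (Finset V)) (X Y : Finset V) : ℕ :=
  (E.filter (fun e => (e ∩ X).card = 2 ∧ (e ∩ Y).card = 1)).card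

/-- `d(X,X,Y) = e(X,X,Y) / (C(|X|,2)·|Y|)`. -/
noncomputable def dXXY {V : Type} [DecidableEq V] (E : Finset (Finset V))
    (X Y : Finset V) : ℝ :=
  (eXXY E X Y : ℝ) / ((X.card.choose 2 : ℝ) * (Y.card : ℝ))

/-- The pair `(X,Y)` is `ε`-homogeneous. -/
noncomputable def EpsHomogeneous {V : Type} [DecidableEq V]
    (E : Finset (Finset V)) (X Y : Finset V) (ε : ℝ) : Prop :=
  (dXXY E X Y ≥ 1 - ε ∧ dXXY E Y X ≥ 1 - ε) ∨ (dXXY E X Y ≤ ε ∧ dXXY E Y X ≤ ε)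

/-
In an induced `D₂`-free hypergraph every link graph is `P₄`-free, so by Seinsche's theorem each of
its induced subgraphs on at least two vertices is disconnected or has disconnected complement; the
complement of the link corresponds to the complementary hypergraph. Fix a vertex `v` and a minimal
homogeneous set `W` containing `v` whose complement has size at most `ξn/2`, and split `W \ {v}`
into the components of the link or of its complement. A component with at least `ξn/10` vertices
forms, together with `v`, a smaller homogeneous set, which yields `X` and `Y`. If there is no such
component, then almost all triples through `v` are non-edges (or almost all are edges). This cannot
happen at every vertex: the density bounds would force linearly many vertices of each kind, and
counting the triples which meet both kinds gives a contradiction.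

Up to complementation no edge of the resulting pair has two vertices in `X` and one in `Y`. Then
each pair in `Y` lies in at most one edge with a vertex of `X`, so `d(Y,Y,X) ≤ 1/|X| ≤ 10/(ξn)`,
which is stronger than the power of `C/n`. For `ξn ≤ 10` the required `ε` is at least `1`.
-/

section Cograph

variable {α : Type*} {G : SimpleGraph α}

/-- `P₄`-free graphs. No distinctness of `a, b, c, d` has to be required: along a walk `a b c d` of
length three with a repeated vertex one of the three chords is an edge anyway. -/
def IsCograph (G : SimpleGraph α) : Prop :=
  ∀ ⦃a b c d⦄, G.Adj a b → G.Adj b c → G.Adj c d → G.Adj a c ∨ G.Adj a d ∨ G.Adj b d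

lemma IsCograph.comap {β : Type*} (hG : IsCograph G) (f : β → α) : IsCograph (G.comap f) :=
  fun _ _ _ _ hab hbc hcd => hG hab hbc hcd

lemma IsCograph.compl (hG : IsCograph G) : IsCograph Gᶜ := by
  intro a b c d hab hbc hcd
  by_contra! hchords
  have hac : a ≠ c := by rintro rfl; exact hchords.2.1 hcd
  have had : a ≠ d := by rintro rfl; exact hchords.2.2 hab.symm
  have hbd : b ≠ d := by rintro rfl; exact hchords.2.1 hab
  simp only [SimpleGraph.compl_adj, not_and_not_right] at hab hbc hcd hchords
  rcases hG (hchords.1 hac).symm (hchords.2.1 had) (hchords.2.2 hbd).symm with h | h | h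
  · exact hcd.2 h
  · exact hbc.2 h.symm
  · exact hab.2 h

lemma IsCograph.eq_or_adj_or_common_neighbor_of_reachable (hG : IsCograph G) {x y : α}
    (hxy : G.Reachable x y) : x = y ∨ G.Adj x y ∨ ∃ w, G.Adj x w ∧ G.Adj w y := by
  rw [SimpleGraph.reachable_iff_reflTransGen] at hxy
  induction hxy with
  | refl => exact Or.inl rfl
  | @tail y z _ hyz ih =>
    rcases ih with rfl | hxy | ⟨w, hxw, hwy⟩
    · exact Or.inr (Or.inl hyz)
    · exact Or.inr (Or.inr ⟨y, hxy, hyz⟩)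
    · rcases hG hxw hwy hyz with h | h | h
      · exact Or.inr (Or.inr ⟨y, h, hyz⟩)
      · exact Or.inr (Or.inl h)
      · exact Or.inr (Or.inr ⟨w, hxw, h⟩)

lemma not_preconnected_compl_of_forall_ne_adj [Nontrivial α] {x : α}
    (h : ∀ u, u ≠ x → G.Adj x u) : ¬ Gᶜ.Preconnected := by
  intro hconn
  obtain ⟨u, hu⟩ := hconn.exists_adj_of_nontrivial x
  exact hu.2 (h u hu.ne')

lemma not_preconnected_or_compl_of_subsingleton [Subsingleton α] [Nontrivial (Option α)]
    {G : SimpleGraph (Option α)} : ¬ G.Preconnected ∨ ¬ Gᶜ.Preconnected := by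
  have hadj_of {H : SimpleGraph (Option α)} {u : α} (hu : H.Adj none (some u)) :
      ¬ Hᶜ.Preconnected :=
    not_preconnected_compl_of_forall_ne_adj (Option.rec (absurd rfl)
      fun w _ => Subsingleton.elim u w ▸ hu)
  obtain ⟨u, hu⟩ : ∃ u : Option α, u ≠ none := exists_ne none
  obtain ⟨u, rfl⟩ := Option.ne_none_iff_exists'.mp hu
  by_cases hadj : G.Adj none (some u)
  · exact Or.inr (hadj_of hadj)
  · rw [← compl_compl G]
    exact Or.inl (hadj_of ⟨hu.symm, hadj⟩)

/-- A non-neighbour `u` of the new vertex stays separated from the other components, as vertices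
joined in a cograph are at distance at most two and a common neighbour of `u` is an old vertex. -/
lemma IsCograph.not_preconnected_or_compl_of_comap_some {G : SimpleGraph (Option α)}
    (hG : IsCograph G) (h : ¬ (G.comap some).Preconnected) :
    ¬ G.Preconnected ∨ ¬ Gᶜ.Preconnected := by
  have : Nontrivial α := not_subsingleton_iff_nontrivial.mp fun _ => h .of_subsingleton
  by_cases hall : ∀ u, G.Adj none (some u)
  · exact Or.inr (not_preconnected_compl_of_forall_ne_adj
      (Option.rec (absurd rfl) fun u _ => hall u))
  left
  intro hconn
  push Not at hall
  obtain ⟨u, hu⟩ := hall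
  have hreach (z : α) : (G.comap some).Reachable u z := by
    rcases hG.eq_or_adj_or_common_neighbor_of_reachable (hconn (some u) (some z)) with
      huz | huz | ⟨w, huw, hwz⟩
    · rw [Option.some_injective α huz]
    · exact SimpleGraph.Adj.reachable huz
    · cases w with
      | none => exact absurd huw.symm hu
      | some w =>
        have huw' : (G.comap some).Adj u w := huw
        have hwz' : (G.comap some).Adj w z := hwz
        exact huw'.reachable.trans hwz'.reachable
  exact h fun x y => (hreach x).symm.trans (hreach y)

lemma compl_comap_of_injective {β : Type*} {f : β → α} (hf : Function.Injective f) :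
    (G.comap f)ᶜ = Gᶜ.comap f := by
  ext x y
  simp only [SimpleGraph.compl_adj, SimpleGraph.comap_adj, hf.ne_iff]

/-- **Seinsche's theorem**. -/
theorem IsCograph.not_preconnected_or_not_preconnected_compl [hfin : Finite α]
    [hnt : Nontrivial α] (hG : IsCograph G) : ¬ G.Preconnected ∨ ¬ Gᶜ.Preconnected := by
  revert G hnt
  induction α using Finite.induction_empty_option with
  | of_equiv e ih =>
    intro G _ hG
    have := e.nontrivial
    have hsplit := ih (hG.comap e)
    rwa [compl_comap_of_injective e.injective, (SimpleGraph.Iso.comap e G).preconnected_iff,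
      (SimpleGraph.Iso.comap e Gᶜ).preconnected_iff] at hsplit
  | h_empty => exact fun {_} hnt => (not_nontrivial _ hnt).elim
  | @h_option β _ ih =>
    intro G _ hG
    rcases subsingleton_or_nontrivial β with _ | _
    · exact not_preconnected_or_compl_of_subsingleton
    · rcases ih (hG.comap some) with hdisc | hdisc
      · exact hG.not_preconnected_or_compl_of_comap_some hdisc
      · rw [compl_comap_of_injective (Option.some_injective β)] at hdisc
        simpa only [compl_compl] using
          (hG.compl.not_preconnected_or_compl_of_comap_some hdisc).symm

end Cograph

section TripleSystem

variable {V : Type*} [DecidableEq V] {E : Finset (Finset V)}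

lemma pairwise_ne_of_triple_mem (hE : (E : Set (Finset V)).Sized 3) {x y z : V}
    (h : {x, y, z} ∈ E) : x ≠ y ∧ x ≠ z ∧ y ≠ z := by
  have hcard : #{x, y, z} = 3 := hE h
  refine ⟨?_, ?_, ?_⟩ <;> rintro rfl
  · grind [card_le_two]
  · grind [card_le_two]
  · grind [card_le_two]

/-- The link graph of `v`: its edges are the pairs `{x, y}` with `{v, x, y} ∈ E`. -/
def link (E : Finset (Finset V)) (v : V) : SimpleGraph V where
  Adj x y := x ≠ y ∧ {v, x, y} ∈ E
  symm := ⟨fun x y ⟨hne, h⟩ => ⟨hne.symm, pair_comm x y ▸ h⟩⟩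
  loopless := ⟨fun _ h => h.1 rfl⟩

lemma link_adj (hE : (E : Set (Finset V)).Sized 3) {v x y : V} :
    (link E v).Adj x y ↔ {v, x, y} ∈ E :=
  and_iff_right_of_imp fun h => (pairwise_ne_of_triple_mem hE h).2.2

variable [Fintype V]

/-- The complementary 3-uniform hypergraph. -/
def coEdges (E : Finset (Finset V)) : Finset (Finset V) :=
  powersetCard 3 univ \ E

lemma mem_coEdges {e : Finset V} : e ∈ coEdges E ↔ #e = 3 ∧ e ∉ E := by
  simp only [coEdges, mem_sdiff, mem_powersetCard_univ]

lemma sized_coEdges (E : Finset (Finset V)) : (coEdges E : Set (Finset V)).Sized 3 :=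
  fun _ he => (mem_coEdges.mp he).1

lemma coEdges_coEdges (hE : (E : Set (Finset V)).Sized 3) : coEdges (coEdges E) = E :=
  Finset.sdiff_sdiff_eq_self (subset_powersetCard_univ_iff.mpr hE)

lemma triple_mem_coEdges {x y z : V} (hxy : x ≠ y) (hxz : x ≠ z) (hyz : y ≠ z) :
    {x, y, z} ∈ coEdges E ↔ {x, y, z} ∉ E := by
  rw [mem_coEdges, and_iff_right (card_eq_three.mpr ⟨x, y, z, hxy, hxz, hyz, rfl⟩)]

lemma induce_link_coEdges {v : V} {Z : Set V} (hv : v ∉ Z) :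
    (link (coEdges E) v).induce Z = ((link E v).induce Z)ᶜ := by
  ext x y
  have hx : v ≠ x := fun h => hv (h ▸ x.2)
  have hy : v ≠ y := fun h => hv (h ▸ y.2)
  simp only [SimpleGraph.comap_adj, SimpleGraph.compl_adj, Function.Embedding.subtype_apply, link,
    ne_eq, Subtype.ext_iff]
  refine and_congr_right fun hxy => ?_
  rw [triple_mem_coEdges hx hy hxy, not_and, imp_iff_right hxy]

end TripleSystem

section InducedD2Free

variable {V : Type} [Fintype V] [DecidableEq V] {E : Finset (Finset V)}

lemma inducedD2Free_coEdges (hD : InducedD2Free E) (hE : (E : Set (Finset V)).Sized 3) :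
    InducedD2Free (coEdges E) := by
  intro S hS hco
  have hdisj : Disjoint {e ∈ E | e ⊆ S} {e ∈ coEdges E | e ⊆ S} :=
    (disjoint_sdiff.mono_left (filter_subset _ _)).mono_right (filter_subset _ _)
  have hunion : {e ∈ E | e ⊆ S} ∪ {e ∈ coEdges E | e ⊆ S} = powersetCard 3 S := by
    ext e
    simp only [mem_union, mem_filter, mem_coEdges, mem_powersetCard]
    have := @hE e
    simp only [mem_coe] at this
    tauto
  have hcount := card_union_of_disjoint hdisj
  rw [hunion, card_powersetCard, hS, hco, show Nat.choose 4 3 = 4 from rfl] at hcount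
  exact hD S hS (by omega)

lemma InducedD2Free.third_edge (hD : InducedD2Free E) (hE : (E : Set (Finset V)).Sized 3)
    {a b c d : V} (hcd : c ≠ d) (habc : {a, b, c} ∈ E) (habd : {a, b, d} ∈ E) :
    {a, c, d} ∈ E ∨ {b, c, d} ∈ E := by
  by_contra! hnot
  obtain ⟨hab, hac, hbc⟩ := pairwise_ne_of_triple_mem hE habc
  obtain ⟨-, had, hbd⟩ := pairwise_ne_of_triple_mem hE habd
  have hcard : #{a, b, c, d} = 4 :=
    card_eq_four.mpr ⟨a, b, c, d, hab, hac, had, hbc, hbd, hcd, rfl⟩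
  have hne : ({a, b, c} : Finset V) ≠ {a, b, d} :=
    ne_of_mem_of_not_mem' (a := c) (by simp) (by grind)
  refine hD {a, b, c, d} hcard (card_eq_two.mpr ⟨{a, b, c}, {a, b, d}, hne, ?_⟩)
  ext e
  simp only [mem_filter, mem_insert, mem_singleton]
  constructor
  · rintro ⟨he, heS⟩
    obtain ⟨t, htS, hte⟩ := exists_mem_notMem_of_card_lt_card (s := e) (t := {a, b, c, d})
      (by rw [hE he, hcard]; norm_num)
    have he_eq : e = ({a, b, c, d} : Finset V).erase t :=
      eq_of_subset_of_card_le (subset_erase.mpr ⟨heS, hte⟩)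
        (by rw [card_erase_of_mem htS, hcard, hE he])
    simp only [mem_insert, mem_singleton] at htS
    rcases htS with rfl | rfl | rfl | rfl
    · exact absurd (by convert he using 1; grind) hnot.2
    · exact absurd (by convert he using 1; grind) hnot.1
    · right; grind
    · left; grind
  · rintro (rfl | rfl)
    · exact ⟨habc, by grind⟩
    · exact ⟨habd, by grind⟩

lemma InducedD2Free.isCograph_link (hD : InducedD2Free E) (hE : (E : Set (Finset V)).Sized 3)
    (v : V) : IsCograph (link E v) := by
  intro a b c d hab hbc hcd
  simp only [link_adj hE] at *
  obtain ⟨hva, -, -⟩ := pairwise_ne_of_triple_mem hE hab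
  obtain ⟨-, hvd, -⟩ := pairwise_ne_of_triple_mem hE hcd
  by_contra! hchords
  obtain ⟨hac, had, hbd⟩ := hchords
  have hane : a ≠ c := by rintro rfl; exact had hcd
  have hbne : b ≠ d := by rintro rfl; exact had hab
  have hadne : a ≠ d := by rintro rfl; exact hbd (pair_comm a b ▸ hab)
  have habc : {b, c, a} ∈ E := by
    have := hD.third_edge hE (a := v) (b := b) (c := a) (d := c) hane
    grind [insert_comm, pair_comm]
  have hbcd : {b, c, d} ∈ E := by
    have := hD.third_edge hE (a := v) (b := c) (c := b) (d := d) hbne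
    grind [insert_comm, pair_comm]
  rcases hD.third_edge hE hadne habc hbcd with habd | hacd
  · have := hD.third_edge hE (a := a) (b := b) (c := v) (d := d) hvd
    grind [insert_comm, pair_comm]
  · have := hD.third_edge hE (a := c) (b := d) (c := v) (d := a) hva
    grind [insert_comm, pair_comm]

end InducedD2Free

section FreePair

variable {V : Type*} [DecidableEq V] {E : Finset (Finset V)} {X X' Y Y' W : Finset V}

/-- `e(X, X, Y) = 0` for disjoint `X` and `Y`. The case `x = x'` is harmless, as edges have three
vertices. -/
def XXYFree (E : Finset (Finset V)) (X Y : Finset V) : Prop :=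
  ∀ x ∈ X, ∀ x' ∈ X, ∀ y ∈ Y, {x, x', y} ∉ E

lemma XXYFree.mono (h : XXYFree E X Y) (hX : X' ⊆ X) (hY : Y' ⊆ Y) : XXYFree E X' Y' :=
  fun x hx x' hx' y hy => h x (hX hx) x' (hX hx') y (hY hy)

lemma xxyFree_of_forall_singleton (h : ∀ y ∈ Y, XXYFree E X {y}) : XXYFree E X Y :=
  fun x hx x' hx' y hy => h y hy x hx x' hx' y (mem_singleton_self y)

variable [Fintype V] {a : ℝ}

/-- Homogeneous sets of vertices: each outside vertex forms an edge with all pairs of vertices of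
`W`, or with none. -/
def IsModule (E : Finset (Finset V)) (W : Finset V) : Prop :=
  ∀ r ∉ W, XXYFree E W {r} ∨ XXYFree (coEdges E) W {r}

lemma isModule_univ (E : Finset (Finset V)) : IsModule E univ :=
  fun r hr => absurd (mem_univ r) hr

lemma isModule_coEdges (hE : (E : Set (Finset V)).Sized 3) :
    IsModule (coEdges E) W ↔ IsModule E W := by
  simp only [IsModule, coEdges_coEdges hE, or_comm]

/-- The size requirements of the theorem on `X`, `Y` and the remainder, where `a = ξn`. -/
structure IsLargePair (a : ℝ) (X Y : Finset V) : Prop where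
  disjoint : Disjoint X Y
  le_card_left : a / 10 ≤ #X
  le_card_right : a / 10 ≤ #Y
  card_compl_union_le : #(X ∪ Y)ᶜ ≤ a / 2

/-- A large pair `(X, Y)` such that every triple with two vertices in `X` and one in `Y` is an edge,
or none is. -/
def HasFreePair (E : Finset (Finset V)) (a : ℝ) : Prop :=
  ∃ X Y, IsLargePair a X Y ∧ (XXYFree E X Y ∨ XXYFree (coEdges E) X Y)

lemma hasFreePair_coEdges (hE : (E : Set (Finset V)).Sized 3) :
    HasFreePair (coEdges E) a ↔ HasFreePair E a := by
  simp only [HasFreePair, coEdges_coEdges hE, or_comm]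

lemma IsModule.hasFreePair (hW : IsModule E W) (hWa : a / 10 ≤ #W)
    (hWc : a / 2 < #Wᶜ) {N : Finset V} (hN : #N ≤ a / 2)
    (hfree : ∀ r ∉ W, r ∉ N → XXYFree E W {r}) : HasFreePair E a := by
  classical
  set F : Finset V := {r ∈ Wᶜ | XXYFree E W {r}} with hF
  set F' : Finset V := {r ∈ Wᶜ | ¬ XXYFree E W {r}} with hF'
  have hF'N : F' ⊆ N := by
    intro r hr
    simp only [hF', mem_filter, mem_compl] at hr
    exact by_contra fun hrN => hr.2 (hfree r hr.1 hrN)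
  have hF'a : (#F' : ℝ) ≤ a / 2 := le_trans (mod_cast card_le_card hF'N) hN
  have hsum : (#F + #F' : ℝ) = #Wᶜ := mod_cast card_filter_add_card_filter_not _
  have hFW : Disjoint W F := disjoint_compl_right.mono_right (filter_subset _ _)
  have hF'W : Disjoint W F' := disjoint_compl_right.mono_right (filter_subset _ _)
  rcases le_or_gt (a / 10) #F with hFa | hFa
  · have hcompl : (W ∪ F)ᶜ = F' := by
      ext r; simp only [hF, hF', mem_filter, mem_compl, mem_union]; tauto
    exact ⟨W, F, ⟨hFW, hWa, hFa, hcompl ▸ hF'a⟩,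
      Or.inl (xxyFree_of_forall_singleton fun r hr => (mem_filter.mp hr).2)⟩
  · have hcompl : (W ∪ F')ᶜ = F := by
      ext r; simp only [hF, hF', mem_filter, mem_compl, mem_union]; tauto
    refine ⟨W, F', ⟨hF'W, hWa, by linarith, by rw [hcompl]; linarith⟩,
      Or.inr (xxyFree_of_forall_singleton fun r hr => ?_)⟩
    simp only [hF', mem_filter, mem_compl] at hr
    exact (hW r hr.1).resolve_left hr.2

end FreePair

section LinkComponent

variable {V : Type*} [DecidableEq V] {E : Finset (Finset V)} {v x : V} {Z : Finset V}

open Classical in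
/-- The vertex set of the component of `x` in the link of `v` induced on `Z`. -/
noncomputable def linkComponent (E : Finset (Finset V)) (v : V) (Z : Finset V) (x : V) :
    Finset V :=
  {y ∈ Z | ∃ (hx : x ∈ Z) (hy : y ∈ Z),
    ((link E v).induce (Z : Set V)).Reachable ⟨x, hx⟩ ⟨y, hy⟩}

lemma linkComponent_subset : linkComponent E v Z x ⊆ Z := by
  classical exact filter_subset _ _

lemma mem_linkComponent {x y : V} (hx : x ∈ Z) (hy : y ∈ Z) :
    y ∈ linkComponent E v Z x ↔ ((link E v).induce (Z : Set V)).Reachable ⟨x, hx⟩ ⟨y, hy⟩ := by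
  simp only [linkComponent, mem_filter, hx, hy, exists_true_left, true_and]

lemma linkComponent_ssubset (h : ¬ ((link E v).induce (Z : Set V)).Preconnected) (hx : x ∈ Z) :
    linkComponent E v Z x ⊂ Z := by
  refine linkComponent_subset.ssubset_of_ne fun heq => h fun y z => ?_
  have hreach (u : V) (hu : u ∈ Z) := (mem_linkComponent hx hu).mp (heq.ge hu)
  exact (hreach y y.2).symm.trans (hreach z z.2)

end LinkComponent

section LinkModule

variable {V : Type} [Fintype V] [DecidableEq V] {E : Finset (Finset V)} {v x : V}
  {W Z : Finset V}

lemma InducedD2Free.triple_notMem_of_link_adj (hD : InducedD2Free E)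
    (hE : (E : Set (Finset V)).Sized 3) {x x' y : V} (hvy : v ≠ y) (hxx' : (link E v).Adj x x')
    (hxy : ¬ (link E v).Adj x y) (hx'y : ¬ (link E v).Adj x' y) : {x, x', y} ∉ E := by
  rw [link_adj hE] at hxx' hxy hx'y
  intro h
  have := hD.third_edge hE (a := x) (b := x') (c := v) (d := y) hvy
  grind [insert_comm, pair_comm]

/-- By `P₄`-freeness, `x` and `x'` are at distance at most two in the link. -/
lemma InducedD2Free.triple_notMem_of_reachable (hD : InducedD2Free E)
    (hE : (E : Set (Finset V)).Sized 3) {Z : Set V} (hv : v ∉ Z) {x x' y : Z}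
    (hxx' : ((link E v).induce Z).Reachable x x') (hxy : ¬ ((link E v).induce Z).Reachable x y) :
    {(x : V), (x' : V), (y : V)} ∉ E := by
  have hvy : v ≠ y := fun h => hv (h ▸ y.2)
  have hnadj {z : Z} (hxz : ((link E v).induce Z).Reachable x z) : ¬ (link E v).Adj z y :=
    fun hzy => hxy (hxz.trans (SimpleGraph.Adj.reachable (G := (link E v).induce Z) hzy))
  intro h
  rcases ((hD.isCograph_link hE v).comap _).eq_or_adj_or_common_neighbor_of_reachable hxx' with
    rfl | hadj | ⟨w, hxw, hwx'⟩
  · exact (pairwise_ne_of_triple_mem hE h).1 rfl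
  · exact hD.triple_notMem_of_link_adj hE hvy hadj (hnadj .rfl) (hnadj hxx') h
  · have hxwy : {(x : V), (w : V), (y : V)} ∉ E :=
      hD.triple_notMem_of_link_adj hE hvy hxw (hnadj .rfl) (hnadj hxw.reachable)
    have hwx'y : {(w : V), (x' : V), (y : V)} ∉ E :=
      hD.triple_notMem_of_link_adj hE hvy hwx' (hnadj hxw.reachable) (hnadj hxx')
    have hwy : (w : V) ≠ y := by rintro hwy; exact hnadj .rfl (hwy ▸ hxw)
    have hxx'w : {(x : V), (x' : V), (w : V)} ∉ E := fun hxx'w => by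
      have := hD.third_edge hE hwy hxx'w h
      grind [insert_comm, pair_comm]
    have hvxx' : ¬ (link E v).Adj x x' := fun hadj =>
      hD.triple_notMem_of_link_adj hE hvy hadj (hnadj .rfl) (hnadj hxx') h
    rw [link_adj hE] at hvxx'
    have := hD.third_edge hE (a := v) (b := w) (pairwise_ne_of_triple_mem hE h).1
      (pair_comm (x : V) w ▸ (link_adj hE).mp hxw) ((link_adj hE).mp hwx')
    grind [insert_comm, pair_comm]

lemma InducedD2Free.xxyFree_insert_linkComponent (hD : InducedD2Free E)
    (hE : (E : Set (Finset V)).Sized 3) (hv : v ∉ Z) (hx : x ∈ Z) :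
    XXYFree E (insert v (linkComponent E v Z x)) (Z \ linkComponent E v Z x) := by
  have hlink {u y : V} (hu : u ∈ linkComponent E v Z x) (hy : y ∈ Z \ linkComponent E v Z x) :
      {v, u, y} ∉ E := by
    rw [mem_sdiff] at hy
    have huZ := linkComponent_subset hu
    rw [mem_linkComponent hx huZ] at hu
    rw [mem_linkComponent hx hy.1] at hy
    intro huy
    have hadj : ((link E v).induce (Z : Set V)).Adj ⟨u, huZ⟩ ⟨y, hy.1⟩ := (link_adj hE).mpr huy
    exact hy.2 (hu.trans hadj.reachable)
  intro u hu u' hu' y hy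
  rw [mem_insert] at hu hu'
  rcases hu with rfl | hu
  · rcases hu' with rfl | hu'
    · exact fun h => (pairwise_ne_of_triple_mem hE h).1 rfl
    · exact hlink hu' hy
  · rcases hu' with rfl | hu'
    · exact insert_comm u u' {y} ▸ hlink hu hy
    · have huZ := linkComponent_subset hu
      have hu'Z := linkComponent_subset hu'
      rw [mem_sdiff] at hy
      rw [mem_linkComponent hx huZ] at hu
      rw [mem_linkComponent hx hu'Z] at hu'
      rw [mem_linkComponent hx hy.1] at hy
      exact hD.triple_notMem_of_reachable hE (mem_coe.not.mpr hv) (hu.symm.trans hu')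
        fun huy => hy.2 (hu.trans huy)

lemma InducedD2Free.isModule_insert_linkComponent (hD : InducedD2Free E)
    (hE : (E : Set (Finset V)).Sized 3) (hW : IsModule E W) (hv : v ∈ W) (hx : x ∈ W.erase v) :
    IsModule E (insert v (linkComponent E v (W.erase v) x)) := by
  have hsub : insert v (linkComponent E v (W.erase v) x) ⊆ W :=
    insert_subset hv (linkComponent_subset.trans (erase_subset v W))
  intro r hr
  by_cases hrW : r ∈ W
  · refine Or.inl ((hD.xxyFree_insert_linkComponent hE (notMem_erase v W) hx).mono subset_rfl ?_)
    grind
  · exact (hW r hrW).imp (.mono · hsub subset_rfl) (.mono · hsub subset_rfl)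

end LinkModule

section Degree

variable {V : Type*} [Fintype V] [DecidableEq V]

/-- The number of edges containing both `v` and `x`. -/
def codegree (E : Finset (Finset V)) (v x : V) : ℕ := #{y | {v, x, y} ∈ E}

/-- Twice the degree of `v`: edges through `v` are counted as ordered pairs of further vertices. -/
def pairDegree (E : Finset (Finset V)) (v : V) : ℕ := ∑ x, codegree E v x

variable {E : Finset (Finset V)} {v x : V} {W : Finset V}

lemma codegree_le_card (E : Finset (Finset V)) (v x : V) : codegree E v x ≤ Fintype.card V :=
  card_le_univ _

lemma codegree_self (hE : (E : Set (Finset V)).Sized 3) (v : V) : codegree E v v = 0 :=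
  card_eq_zero.mpr (filter_eq_empty_iff.mpr fun _ _ h => (pairwise_ne_of_triple_mem hE h).1 rfl)

lemma codegree_le_card_linkComponent_add (hE : (E : Set (Finset V)).Sized 3)
    (hx : x ∈ W.erase v) :
    codegree E v x ≤ #(linkComponent E v (W.erase v) x) + #Wᶜ := by
  refine (card_le_card fun y hy => ?_).trans (card_union_le _ _)
  rw [mem_filter_univ] at hy
  by_cases hyW : y ∈ W
  · have hyZ : y ∈ W.erase v := mem_erase.mpr ⟨(pairwise_ne_of_triple_mem hE hy).2.1.symm, hyW⟩
    have hadj : ((link E v).induce (W.erase v : Set V)).Adj ⟨x, hx⟩ ⟨y, hyZ⟩ :=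
      (link_adj hE).mpr hy
    exact mem_union_left _ ((mem_linkComponent hx hyZ).mpr hadj.reachable)
  · exact mem_union_right _ (mem_compl.mpr hyW)

lemma pairDegree_le_of_codegree_le (hE : (E : Set (Finset V)).Sized 3) {k : ℕ}
    (hk : ∀ x ∈ W.erase v, codegree E v x ≤ k) :
    pairDegree E v ≤ (k + #Wᶜ) * Fintype.card V := by
  have hcodeg (x : V) : codegree E v x ≤ k + if x ∈ Wᶜ then Fintype.card V else 0 := by
    by_cases hx : x ∈ Wᶜ
    · simpa only [hx, if_true] using (codegree_le_card E v x).trans le_add_self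
    · rw [if_neg hx, add_zero]
      obtain rfl | hxv := eq_or_ne x v
      · simp only [codegree_self hE, zero_le]
      · exact hk x (mem_erase.mpr ⟨hxv, by simpa only [mem_compl, not_not] using hx⟩)
  refine (sum_le_sum fun x _ => hcodeg x).trans_eq ?_
  rw [sum_add_distrib, sum_const, card_univ, sum_ite_mem, univ_inter, sum_const, smul_eq_mul,
    smul_eq_mul]
  ring

end Degree

section VertexDichotomy

variable {V : Type} [Fintype V] [DecidableEq V] {E : Finset (Finset V)} {v : V} {W : Finset V}
  {a : ℝ}

/-- If the components are small, then few triples through `v` are edges; a large component together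
with `v` is a module to which almost every outside vertex is attached by non-edges. -/
lemma InducedD2Free.hasFreePair_or_pairDegree_le_of_not_preconnected (hD : InducedD2Free E)
    (hE : (E : Set (Finset V)).Sized 3) (hW : IsModule E W) (hv : v ∈ W) (hWc : #Wᶜ ≤ a / 2)
    (hmin : ∀ W' ⊂ W, v ∈ W' → IsModule E W' → a / 2 < #W'ᶜ)
    (hlink : ¬ ((link E v).induce (W.erase v : Set V)).Preconnected) :
    HasFreePair E a ∨ pairDegree E v ≤ 11 / 10 * a * Fintype.card V := by
  by_cases hlarge : ∃ x ∈ W.erase v, a / 10 ≤ #(linkComponent E v (W.erase v) x)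
  · left
    obtain ⟨x, hx, hxa⟩ := hlarge
    set A := linkComponent E v (W.erase v) x
    have hmodule := hD.isModule_insert_linkComponent hE hW hv hx
    have hssubset : insert v A ⊂ W := by
      obtain ⟨y, hyZ, hyA⟩ := exists_of_ssubset (linkComponent_ssubset hlink hx)
      have hsubset : insert v A ⊆ W :=
        insert_subset hv (linkComponent_subset.trans (erase_subset v W))
      exact (ssubset_iff_of_subset hsubset).mpr ⟨y, by grind⟩
    refine hmodule.hasFreePair (hxa.trans (mod_cast card_le_card (subset_insert v A)))
      (hmin _ hssubset (mem_insert_self v A) hmodule) hWc fun r hr hrW => ?_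
    refine (hD.xxyFree_insert_linkComponent hE (notMem_erase v W) hx).mono subset_rfl ?_
    rw [mem_insert, not_or] at hr
    rw [mem_compl, not_not] at hrW
    exact singleton_subset_iff.mpr (mem_sdiff.mpr ⟨mem_erase.mpr ⟨hr.1, hrW⟩, hr.2⟩)
  · right
    push Not at hlarge
    have hcodeg (x : V) (hx : x ∈ W.erase v) : codegree E v x ≤ ⌊a / 10⌋₊ + #Wᶜ :=
      (codegree_le_card_linkComponent_add hE hx).trans
        (Nat.add_le_add_right (Nat.le_floor (hlarge x hx).le) _)
    have ha : 0 ≤ a := by linarith [Nat.cast_nonneg (α := ℝ) #Wᶜ]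
    have hdeg : (pairDegree E v : ℝ) ≤ (⌊a / 10⌋₊ + #Wᶜ + #Wᶜ) * Fintype.card V :=
      mod_cast pairDegree_le_of_codegree_le hE hcodeg
    have hfloor := Nat.floor_le (div_nonneg ha (by norm_num : (0 : ℝ) ≤ 10))
    exact hdeg.trans (mul_le_mul_of_nonneg_right (by linarith) (Nat.cast_nonneg _))

lemma exists_minimal_isModule (E : Finset (Finset V)) (v : V) (ha : 0 ≤ a) :
    ∃ W, IsModule E W ∧ v ∈ W ∧ #Wᶜ ≤ a / 2 ∧
      ∀ W' ⊂ W, v ∈ W' → IsModule E W' → a / 2 < #W'ᶜ := by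
  obtain ⟨W, hW⟩ := exists_minimal_of_wellFoundedLT
    (fun W : Finset V => IsModule E W ∧ v ∈ W ∧ #Wᶜ ≤ a / 2)
    ⟨univ, isModule_univ E, mem_univ v, by simpa using by positivity⟩
  refine ⟨W, hW.prop.1, hW.prop.2.1, hW.prop.2.2, fun W' hW' hv hmodule => ?_⟩
  exact not_le.mp fun hle => hW.not_prop_of_lt hW' ⟨hmodule, hv, hle⟩

lemma InducedD2Free.hasFreePair_or_pairDegree_le (hD : InducedD2Free E)
    (hE : (E : Set (Finset V)).Sized 3) (ha : 0 ≤ a) (han : a / 2 + 3 ≤ Fintype.card V) (v : V) :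
    HasFreePair E a ∨ pairDegree E v ≤ 11 / 10 * a * Fintype.card V ∨
      pairDegree (coEdges E) v ≤ 11 / 10 * a * Fintype.card V := by
  obtain ⟨W, hW, hv, hWc, hmin⟩ := exists_minimal_isModule E v ha
  have hnontrivial : Nontrivial (W.erase v : Set V) := by
    have hcard : (#W + #Wᶜ : ℝ) = Fintype.card V := mod_cast card_add_card_compl W
    have hW3 : 3 ≤ #W := by rify; linarith
    have : 1 < #(W.erase v) := by rw [card_erase_of_mem hv]; omega
    exact (one_lt_card_iff_nontrivial.mp this).coe_sort
  rcases IsCograph.not_preconnected_or_not_preconnected_compl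
    ((hD.isCograph_link hE v).comap (Function.Embedding.subtype (· ∈ (W.erase v : Set V)))) with
    hlink | hlink
  · exact (hD.hasFreePair_or_pairDegree_le_of_not_preconnected hE hW hv hWc hmin hlink).imp_right
      Or.inl
  · rw [← hasFreePair_coEdges hE]
    simp only [← isModule_coEdges hE] at hW hmin
    rw [← SimpleGraph.induce, ← induce_link_coEdges (mem_coe.not.mpr (notMem_erase v W))] at hlink
    exact ((inducedD2Free_coEdges hD hE).hasFreePair_or_pairDegree_le_of_not_preconnected
      (sized_coEdges E) hW hv hWc hmin hlink).imp_right Or.inr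

end VertexDichotomy

section DoubleCounting

variable {V : Type*} [Fintype V] [DecidableEq V] {E : Finset (Finset V)}

lemma pairDegree_eq_two_mul_card (hE : (E : Set (Finset V)).Sized 3) (v : V) :
    pairDegree E v = 2 * #{e ∈ E | v ∈ e} := by
  have hpairs : pairDegree E v = #{p : V × V | {v, p.1, p.2} ∈ E} := by
    simp only [pairDegree, codegree, card_filter, Fintype.sum_prod_type]
  rw [hpairs, card_eq_sum_card_fiberwise (f := fun p : V × V => ({v, p.1, p.2} : Finset V))
    (t := {e ∈ E | v ∈ e}) (fun p hp => by simpa using hp), mul_comm, ← smul_eq_mul]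
  refine sum_const_nat fun e he => ?_
  obtain ⟨heE, hve⟩ := mem_filter.mp he
  have hfiber : ({p ∈ ({p | {v, p.1, p.2} ∈ E} : Finset (V × V)) | {v, p.1, p.2} = e} :
      Finset (V × V)) = (e.erase v).offDiag := by
    ext ⟨x, y⟩
    simp only [mem_filter, mem_univ, true_and, mem_offDiag, mem_erase]
    constructor
    · rintro ⟨hmem, rfl⟩
      have := pairwise_ne_of_triple_mem hE hmem
      grind
    · rintro ⟨⟨hxv, hx⟩, ⟨hyv, hy⟩, hxy⟩
      have hcard : #{v, x, y} = 3 := card_eq_three.mpr ⟨v, x, y, hxv.symm, hyv.symm, hxy, rfl⟩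
      have heq : {v, x, y} = e := eq_of_subset_of_card_le (by grind) (by rw [hE heE, hcard])
      exact ⟨heq ▸ heE, heq⟩
  rw [hfiber, offDiag_card, card_erase_of_mem hve, hE heE]

lemma sum_pairDegree (hE : (E : Set (Finset V)).Sized 3) : ∑ v, pairDegree E v = 6 * #E := by
  have hincidence : ∑ v, #{e ∈ E | v ∈ e} = #E * 3 := by
    rw [← sum_const_nat (f := card) fun e he => hE he]
    simpa [bipartiteAbove, bipartiteBelow] using
      sum_card_bipartiteAbove_eq_sum_card_bipartiteBelow (s := univ) (t := E) (fun v e => v ∈ e)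
  simp only [pairDegree_eq_two_mul_card hE, ← mul_sum, hincidence]
  ring

lemma pairDegree_le_sq (E : Finset (Finset V)) (v : V) : pairDegree E v ≤ Fintype.card V ^ 2 := by
  have := sum_le_card_nsmul univ _ _ fun x _ => codegree_le_card E v x
  rwa [smul_eq_mul, card_univ, ← sq] at this

lemma codegree_comm (E : Finset (Finset V)) (v x : V) : codegree E v x = codegree E x v := by
  simp only [codegree, insert_comm]

lemma codegree_add_codegree_coEdges (hE : (E : Set (Finset V)).Sized 3) {v x : V} (hvx : v ≠ x) :
    codegree E v x + codegree (coEdges E) v x = Fintype.card V - 2 := by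
  have hedge : ({y | {v, x, y} ∈ E} : Finset V) = {y ∈ ({v, x} : Finset V)ᶜ | {v, x, y} ∈ E} := by
    ext y
    have := @pairwise_ne_of_triple_mem _ _ E hE v x y
    simp only [mem_filter, mem_univ, mem_compl, mem_insert, mem_singleton]
    tauto
  have hcoedge : ({y | {v, x, y} ∈ coEdges E} : Finset V) =
      {y ∈ ({v, x} : Finset V)ᶜ | {v, x, y} ∉ E} := by
    ext y
    have := @pairwise_ne_of_triple_mem _ _ _ (sized_coEdges E) v x y
    have := @triple_mem_coEdges _ _ E _ v x y hvx
    simp only [mem_filter, mem_univ, mem_compl, mem_insert, mem_singleton]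
    tauto
  rw [codegree, codegree, hedge, hcoedge, card_filter_add_card_filter_not, card_compl,
    card_pair hvx]

/-- A triple meeting both `P` and `Q` is an edge or a co-edge, hence is counted on the right. -/
lemma card_mul_card_mul_le_sum_pairDegree (hE : (E : Set (Finset V)).Sized 3) {P Q : Finset V}
    (hPQ : Disjoint P Q) :
    #P * #Q * (Fintype.card V - 2) ≤
      ∑ p ∈ P, pairDegree (coEdges E) p + ∑ q ∈ Q, pairDegree E q := by
  have hsum : ∑ p ∈ P, ∑ q ∈ Q, (codegree (coEdges E) p q + codegree E p q) =
      #P * #Q * (Fintype.card V - 2) := by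
    rw [mul_assoc]
    refine sum_const_nat fun p hp => sum_const_nat fun q hq => ?_
    rw [add_comm, codegree_add_codegree_coEdges hE (disjoint_iff_ne.mp hPQ p hp q hq)]
  rw [← hsum]
  simp only [sum_add_distrib]
  rw [sum_comm (f := fun p q => codegree E p q)]
  simp only [codegree_comm E, pairDegree]
  gcongr <;> exact subset_univ _

lemma card_mul_card_compl_mul_le (hE : (E : Set (Finset V)).Sized 3) (hn : 2 ≤ Fintype.card V)
    {P : Finset V} {δ : ℝ} (hP : ∀ v ∈ P, pairDegree (coEdges E) v ≤ δ)
    (hPc : ∀ v ∉ P, pairDegree E v ≤ δ) :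
    #P * #Pᶜ * (Fintype.card V - 2 : ℝ) ≤ Fintype.card V * δ := by
  have hcount := card_mul_card_mul_le_sum_pairDegree hE (disjoint_compl_right (a := P))
  rify [hn] at hcount
  calc #P * #Pᶜ * (Fintype.card V - 2 : ℝ) ≤ ∑ p ∈ P, (pairDegree (coEdges E) p : ℝ) +
        ∑ q ∈ Pᶜ, (pairDegree E q : ℝ) := hcount
    _ ≤ #P • δ + #Pᶜ • δ := add_le_add (sum_le_card_nsmul _ _ _ hP)
        (sum_le_card_nsmul _ _ _ fun q hq => hPc q (mem_compl.mp hq))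
    _ = Fintype.card V * δ := by rw [← add_smul, card_add_card_compl, nsmul_eq_mul]

end DoubleCounting

section Density

variable {V : Type} [Fintype V] [DecidableEq V] {E : Finset (Finset V)} {β : ℝ}

lemma densH_coEdges (hE : (E : Set (Finset V)).Sized 3) (hn : 3 ≤ Fintype.card V) :
    densH (coEdges E) = 1 - densH E := by
  have hpos : ((Fintype.card V).choose 3 : ℝ) ≠ 0 := mod_cast (Nat.choose_pos hn).ne'
  have hsub : E ⊆ powersetCard 3 univ := subset_powersetCard_univ_iff.mpr hE
  rw [densH, densH, coEdges, card_sdiff_of_subset hsub, Nat.cast_sub (card_le_card hsub),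
    card_powersetCard, card_univ, sub_div, div_self hpos]

lemma mul_le_six_mul_card_of_le_densH (hn : 3 ≤ Fintype.card V) (hβ : β ≤ densH E) :
    β * (Fintype.card V * (Fintype.card V - 1) * (Fintype.card V - 2)) ≤ 6 * #E := by
  have hpos : (0 : ℝ) < (Fintype.card V).choose 3 := mod_cast Nat.choose_pos hn
  have hchoose : (Fintype.card V * (Fintype.card V - 1) * (Fintype.card V - 2) : ℝ) =
      6 * (Fintype.card V).choose 3 := by
    have := congrArg (Nat.cast (R := ℝ)) (Nat.descFactorial_eq_factorial_mul_choose
      (Fintype.card V) 3)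
    simp only [Nat.descFactorial_succ, Nat.descFactorial_zero] at this
    push_cast [Nat.cast_sub (show 1 ≤ Fintype.card V by omega),
      Nat.cast_sub (show 2 ≤ Fintype.card V by omega)] at this
    norm_num [Nat.factorial] at this
    linarith
  rw [densH, le_div_iff₀ hpos] at hβ
  rw [hchoose]
  linarith

lemma le_card_of_pairDegree_le (hE : (E : Set (Finset V)).Sized 3) (hβ : 0 ≤ β)
    (hβE : β ≤ densH E) (hn : 640 ≤ Fintype.card V) {P : Finset V}
    (hP : ∀ v ∉ P, pairDegree E v ≤ 11 / 320 * β * (Fintype.card V : ℝ) ^ 2) :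
    9 / 10 * β * Fintype.card V ≤ #P := by
  have hcount : (6 * #E : ℝ) ≤
      #P * (Fintype.card V : ℝ) ^ 2 + #Pᶜ * (11 / 320 * β * Fintype.card V ^ 2) := by
    rw [← nsmul_eq_mul, ← nsmul_eq_mul #Pᶜ]
    calc (6 * #E : ℝ) = ∑ v ∈ P, (pairDegree E v : ℝ) + ∑ v ∈ Pᶜ, (pairDegree E v : ℝ) := by
          rw [sum_add_sum_compl]
          exact mod_cast (sum_pairDegree hE).symm
      _ ≤ _ := add_le_add (sum_le_card_nsmul _ _ _ fun v _ => mod_cast pairDegree_le_sq E v)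
          (sum_le_card_nsmul _ _ _ fun v hv => hP v (mem_compl.mp hv))
  have hdens := mul_le_six_mul_card_of_le_densH (by omega) hβE
  have hPc : (#Pᶜ : ℝ) ≤ Fintype.card V := mod_cast card_le_univ _
  set n : ℝ := (Fintype.card V : ℝ)
  have hn' : (640 : ℝ) ≤ n := Nat.ofNat_le_cast.mpr hn
  have hquad : 99 / 100 * n ^ 2 ≤ (n - 1) * (n - 2) := by nlinarith
  have hchain : 9 / 10 * β * n * n ^ 2 ≤ #P * n ^ 2 := by
    have htriples : β * n * (99 / 100 * n ^ 2) ≤ β * n * ((n - 1) * (n - 2)) := by gcongr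
    have hsparse : #Pᶜ * (11 / 320 * β * n ^ 2) ≤ n * (11 / 320 * β * n ^ 2) := by gcongr
    linarith [show 0 ≤ β * n ^ 3 by positivity]
  exact le_of_mul_le_mul_right hchain (by positivity)

/-- The threshold is `11/10 * a * n` for `a = ξn = β²n/16`. -/
lemma exists_lt_pairDegree_and_lt_pairDegree_coEdges (hE : (E : Set (Finset V)).Sized 3)
    (hβ : 0 < β) (hβE : β ≤ densH E) (hEβ : densH E ≤ 1 - β) (hn : 640 ≤ Fintype.card V) :
    ∃ v, 11 / 160 * β ^ 2 * (Fintype.card V : ℝ) ^ 2 < pairDegree E v ∧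
      11 / 160 * β ^ 2 * (Fintype.card V : ℝ) ^ 2 < pairDegree (coEdges E) v := by
  by_contra! hall
  have hβ2 : β ≤ 1 / 2 := by linarith
  set n : ℝ := (Fintype.card V : ℝ)
  set δ : ℝ := 11 / 160 * β ^ 2 * n ^ 2
  have hδ : δ ≤ 11 / 320 * β * n ^ 2 := by
    have hβsq : β ^ 2 ≤ β / 2 := by nlinarith
    calc δ = 11 / 160 * β ^ 2 * n ^ 2 := rfl
      _ ≤ 11 / 160 * (β / 2) * n ^ 2 := by gcongr
      _ = 11 / 320 * β * n ^ 2 := by ring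
  set P : Finset V := {v | δ < pairDegree E v} with hP_def
  have hP (v : V) (hv : v ∉ P) : pairDegree E v ≤ δ := by
    simpa only [hP_def, mem_filter_univ, not_lt] using hv
  have hPc (v : V) (hv : v ∈ P) : pairDegree (coEdges E) v ≤ δ :=
    hall v ((mem_filter_univ v).mp hv)
  have hPcard : 9 / 10 * β * n ≤ #P :=
    le_card_of_pairDegree_le hE hβ.le hβE hn fun v hv => (hP v hv).trans hδ
  have hPccard : 9 / 10 * β * n ≤ #Pᶜ :=
    le_card_of_pairDegree_le (sized_coEdges E) hβ.le
      (by rw [densH_coEdges hE (by omega)]; linarith) hn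
      fun v hv => (hPc v (notMem_compl.mp hv)).trans hδ
  have hn' : (640 : ℝ) ≤ n := Nat.ofNat_le_cast.mpr hn
  have hsum : (#P + #Pᶜ : ℝ) = n := by simpa only [n] using mod_cast card_add_card_compl P
  have hcross : #P * #Pᶜ * (n - 2) ≤ n * δ :=
    card_mul_card_compl_mul_le hE (by omega) hPc hP
  have hprod : 9 / 20 * β * n ^ 2 ≤ #P * #Pᶜ := by
    nlinarith [mul_nonneg (sub_nonneg.mpr hPcard) (sub_nonneg.mpr hPccard),
      mul_nonneg (mul_nonneg hβ.le (sub_nonneg.mpr hβ2)) (sq_nonneg n)]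
  have hlower : 9 / 20 * β * n ^ 2 * (n / 2) ≤ #P * #Pᶜ * (n - 2) := by gcongr; linarith
  have hpos : 0 < β * n ^ 2 * n := by positivity
  have hupper : n * δ ≤ n * (11 / 320 * β * n ^ 2) := by gcongr
  linarith

theorem InducedD2Free.hasFreePair (hD : InducedD2Free E) (hE : (E : Set (Finset V)).Sized 3)
    (hβ : 0 < β) (hβE : β ≤ densH E) (hEβ : densH E ≤ 1 - β)
    (hn : 10 < β ^ 2 / 16 * Fintype.card V) : HasFreePair E (β ^ 2 / 16 * Fintype.card V) := by
  have hβ2 : β ^ 2 ≤ 1 / 4 := by nlinarith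
  have hβn : β ^ 2 * Fintype.card V ≤ 1 / 4 * Fintype.card V := by gcongr
  have hn640 : 640 ≤ Fintype.card V := by rify; linarith
  obtain ⟨v, hv, hv'⟩ := exists_lt_pairDegree_and_lt_pairDegree_coEdges hE hβ hβE hEβ hn640
  rcases hD.hasFreePair_or_pairDegree_le hE (a := β ^ 2 / 16 * Fintype.card V) (by linarith)
    (by linarith) v with h | h | h
  · exact h
  · linarith
  · linarith

end Density

section Homogeneity

variable {V : Type} [DecidableEq V] {E : Finset (Finset V)} {X Y : Finset V} {ε ε' : ℝ}

lemma EpsHomogeneous.mono (h : EpsHomogeneous E X Y ε) (hε : ε ≤ ε') :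
    EpsHomogeneous E X Y ε' := by
  have : 1 - ε' ≤ 1 - ε := sub_le_sub_left hε 1
  exact h.imp (.imp this.trans this.trans) (.imp (·.trans hε) (·.trans hε))

lemma epsHomogeneous_one (E : Finset (Finset V)) (X Y : Finset V) : EpsHomogeneous E X Y 1 := by
  have hnonneg (X Y : Finset V) : dXXY E X Y ≥ 1 - 1 := by
    rw [sub_self, dXXY]
    positivity
  exact Or.inl ⟨hnonneg X Y, hnonneg Y X⟩

lemma eXXY_eq_card_filter_product (hE : (E : Set (Finset V)).Sized 3) (hXY : Disjoint X Y) :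
    eXXY E X Y = #{p ∈ powersetCard 2 X ×ˢ Y | insert p.2 p.1 ∈ E} := by
  have hinter {p : Finset V} {y : V} (hp : p ⊆ X) (hy : y ∈ Y) :
      insert y p ∩ X = p ∧ insert y p ∩ Y = {y} := by
    have := disjoint_left.mp hXY
    constructor <;> grind
  symm
  refine card_nbij (fun p => insert p.2 p.1) ?_ ?_ ?_
  · rintro ⟨p, y⟩ hpy
    simp only [mem_coe, mem_filter, mem_product, mem_powersetCard] at hpy ⊢
    obtain ⟨⟨⟨hp, hp2⟩, hy⟩, hpyE⟩ := hpy
    rw [(hinter hp hy).1, (hinter hp hy).2]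
    exact ⟨hpyE, hp2, card_singleton y⟩
  · rintro ⟨p, y⟩ hpy ⟨q, z⟩ hqz heq
    simp only [mem_coe, mem_filter, mem_product, mem_powersetCard] at hpy hqz heq
    have hpy' := hinter hpy.1.1.1 hpy.1.2
    have hqz' := hinter hqz.1.1.1 hqz.1.2
    rw [heq] at hpy'
    exact Prod.ext (hpy'.1.symm.trans hqz'.1) (singleton_injective (hpy'.2.symm.trans hqz'.2))
  · intro e he
    obtain ⟨heE, heX, heY⟩ := mem_filter.mp he
    obtain ⟨y, hy⟩ := card_eq_one.mp heY
    have hyeY : y ∈ e ∩ Y := hy ▸ mem_singleton_self y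
    have hyX : y ∉ e ∩ X := fun h =>
      disjoint_left.mp hXY (mem_of_mem_inter_right h) (mem_of_mem_inter_right hyeY)
    have heq : insert y (e ∩ X) = e :=
      eq_of_subset_of_card_le (insert_subset (mem_of_mem_inter_left hyeY) inter_subset_left)
        (by rw [card_insert_of_notMem hyX, heX, hE heE])
    refine ⟨(e ∩ X, y), ?_, heq⟩
    simp only [mem_coe, mem_filter, mem_product, mem_powersetCard, heq]
    exact ⟨⟨⟨inter_subset_right, heX⟩, mem_of_mem_inter_right hyeY⟩, heE⟩

lemma XXYFree.eXXY_eq_zero (h : XXYFree E X Y) (hE : (E : Set (Finset V)).Sized 3)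
    (hXY : Disjoint X Y) : eXXY E X Y = 0 := by
  rw [eXXY_eq_card_filter_product hE hXY, card_eq_zero, filter_eq_empty_iff]
  rintro ⟨p, y⟩ hpy hpyE
  rw [mem_product, mem_powersetCard] at hpy
  obtain ⟨x, x', -, rfl⟩ := card_eq_two.mp hpy.1.2
  refine h x (hpy.1.1 (by simp)) x' (hpy.1.1 (by simp)) y hpy.2 ?_
  convert hpyE using 1
  grind

variable [Fintype V]

lemma dXXY_add_dXXY_coEdges (hE : (E : Set (Finset V)).Sized 3) (hXY : Disjoint X Y)
    (hX : 2 ≤ #X) (hY : Y.Nonempty) : dXXY E X Y + dXXY (coEdges E) X Y = 1 := by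
  have hfilter : {p ∈ powersetCard 2 X ×ˢ Y | insert p.2 p.1 ∈ coEdges E} =
      {p ∈ powersetCard 2 X ×ˢ Y | insert p.2 p.1 ∉ E} := by
    refine filter_congr fun ⟨p, y⟩ hpy => ?_
    rw [mem_product, mem_powersetCard] at hpy
    have hyp : y ∉ p := fun hy => disjoint_left.mp hXY (hpy.1.1 hy) hpy.2
    rw [mem_coEdges, card_insert_of_notMem hyp, hpy.1.2, and_iff_right rfl]
  have hcount : (eXXY E X Y + eXXY (coEdges E) X Y : ℝ) = (#X).choose 2 * #Y := by
    rw [eXXY_eq_card_filter_product hE hXY,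
      eXXY_eq_card_filter_product (sized_coEdges E) hXY, hfilter]
    norm_cast
    rw [card_filter_add_card_filter_not, card_product, card_powersetCard]
  have hX' : ((#X).choose 2 : ℝ) ≠ 0 := mod_cast (Nat.choose_pos hX).ne'
  have hY' : (#Y : ℝ) ≠ 0 := mod_cast hY.card_ne_zero
  rw [dXXY, dXXY, ← add_div, hcount, div_self (mul_ne_zero hX' hY')]

lemma EpsHomogeneous.of_coEdges (hE : (E : Set (Finset V)).Sized 3) (hXY : Disjoint X Y)
    (hX : 2 ≤ #X) (hY : 2 ≤ #Y) (h : EpsHomogeneous (coEdges E) X Y ε) :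
    EpsHomogeneous E X Y ε := by
  have hXXY := dXXY_add_dXXY_coEdges hE hXY hX (card_pos.mp (by omega))
  have hYYX := dXXY_add_dXXY_coEdges hE hXY.symm hY (card_pos.mp (by omega))
  refine h.symm.imp ?_ ?_ <;> rintro ⟨_, _⟩ <;> constructor <;> linarith

/-- Two edges `y y' x₁`, `y y' x₂` would force a third edge `y x₁ x₂` or `y' x₁ x₂`. -/
lemma XXYFree.eXXY_swap_le (h : XXYFree E X Y) (hD : InducedD2Free E)
    (hE : (E : Set (Finset V)).Sized 3) (hXY : Disjoint X Y) : eXXY E Y X ≤ (#Y).choose 2 := by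
  rw [eXXY_eq_card_filter_product hE hXY.symm, ← card_powersetCard]
  refine card_le_card_of_injOn Prod.fst (fun p hp => ?_) ?_
  · exact (mem_product.mp (mem_filter.mp hp).1).1
  rintro ⟨p, x₁⟩ h₁ ⟨_, x₂⟩ h₂ rfl
  simp only [mem_coe, mem_filter, mem_product, mem_powersetCard] at h₁ h₂
  obtain ⟨⟨⟨hp, hp2⟩, hx₁⟩, h₁E⟩ := h₁
  obtain ⟨⟨-, hx₂⟩, h₂E⟩ := h₂
  obtain ⟨y, y', -, rfl⟩ := card_eq_two.mp hp2
  by_contra hne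
  have hx₁₂ : x₁ ≠ x₂ := fun heq => hne (heq ▸ rfl)
  have hfree (z : V) (hz : z ∈ Y) : {z, x₁, x₂} ∉ E := fun hzE =>
    h x₁ hx₁ x₂ hx₂ z hz (by convert hzE using 1; grind)
  rcases hD.third_edge hE (a := y) (b := y') hx₁₂ (by convert h₁E using 1; grind)
    (by convert h₂E using 1; grind) with hyE | hyE
  · exact hfree y (hp (by simp)) hyE
  · exact hfree y' (hp (by simp)) hyE

lemma XXYFree.epsHomogeneous (h : XXYFree E X Y) (hD : InducedD2Free E)
    (hE : (E : Set (Finset V)).Sized 3) (hXY : Disjoint X Y) :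
    EpsHomogeneous E X Y (1 / #X) := by
  refine Or.inr ⟨?_, ?_⟩
  · rw [dXXY, h.eXXY_eq_zero hE hXY, Nat.cast_zero, zero_div]
    positivity
  · have hle : (eXXY E Y X : ℝ) ≤ (#Y).choose 2 := mod_cast h.eXXY_swap_le hD hE hXY
    rw [dXXY, ← div_div]
    gcongr
    exact div_le_one_of_le₀ hle (Nat.cast_nonneg _)

end Homogeneity

section Partition

variable {V : Type} [Fintype V] [DecidableEq V] {E : Finset (Finset V)} {a : ℝ}

lemma HasFreePair.exists_epsHomogeneous (h : HasFreePair E a) (hD : InducedD2Free E)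
    (hE : (E : Set (Finset V)).Sized 3) (ha : 10 < a) :
    ∃ X Y, IsLargePair a X Y ∧ EpsHomogeneous E X Y (10 / a) := by
  obtain ⟨X, Y, hXY, hfree⟩ := h
  have hX : 2 ≤ #X := Nat.one_lt_cast.mp (lt_of_lt_of_le (by linarith) hXY.le_card_left)
  have hY : 2 ≤ #Y := Nat.one_lt_cast.mp (lt_of_lt_of_le (by linarith) hXY.le_card_right)
  have hε : 1 / #X ≤ 10 / a := by
    rw [← one_div_div a 10]
    exact one_div_le_one_div_of_le (by linarith) hXY.le_card_left
  refine ⟨X, Y, hXY, EpsHomogeneous.mono ?_ hε⟩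
  rcases hfree with hfree | hfree
  · exact hfree.epsHomogeneous hD hE hXY.disjoint
  · exact .of_coEdges hE hXY.disjoint hX hY
      (hfree.epsHomogeneous (inducedD2Free_coEdges hD hE) (sized_coEdges E) hXY.disjoint)

lemma exists_isLargePair (hV : 2 ≤ Fintype.card V) (ha₀ : 0 ≤ a) (ha : a ≤ 10) :
    ∃ X Y : Finset V, IsLargePair a X Y := by
  have : Nontrivial V := Fintype.one_lt_card_iff_nontrivial.mp hV
  obtain ⟨x, y, hxy⟩ := exists_pair_ne V
  have hone {X : Finset V} (hX : X.Nonempty) : a / 10 ≤ #X := by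
    have : (1 : ℝ) ≤ #X := mod_cast hX.card_pos
    linarith
  refine ⟨{x}, {x}ᶜ, disjoint_compl_right, hone (singleton_nonempty x),
    hone ⟨y, by simpa using hxy.symm⟩, ?_⟩
  rw [union_compl, compl_univ, card_empty, Nat.cast_zero]
  positivity

lemma exists_isLargePair_epsHomogeneous {β : ℝ} (hβ : 0 < β)
    (hE : (E : Set (Finset V)).Sized 3) (hD : InducedD2Free E) (hβE : β ≤ densH E)
    (hEβ : densH E ≤ 1 - β) :
    ∃ X Y, IsLargePair (β ^ 2 / 16 * Fintype.card V) X Y ∧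
      EpsHomogeneous E X Y (min 1 (10 / (β ^ 2 / 16 * Fintype.card V))) := by
  rcases lt_or_ge 10 (β ^ 2 / 16 * Fintype.card V : ℝ) with hn | hn
  · rw [min_eq_right ((div_le_one (by linarith)).mpr hn.le)]
    exact (hD.hasFreePair hE hβ hβE hEβ hn).exists_epsHomogeneous hD hE hn
  · have hV : 2 ≤ Fintype.card V := by
      by_contra! hV
      rw [densH, Nat.choose_eq_zero_of_lt (by omega), Nat.cast_zero, div_zero] at hβE
      linarith
    obtain ⟨X, Y, hXY⟩ := exists_isLargePair hV (by positivity) hn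
    refine ⟨X, Y, hXY, ?_⟩
    rw [min_eq_left ((one_le_div (by positivity)).mpr hn)]
    exact epsHomogeneous_one E X Y

end Partition

lemma min_one_div_le_mul_rpow {C ξ n : ℝ} (hC : 10 ≤ C) (hξ : 0 < ξ) (hξ1 : ξ ≤ 1) (hn : 0 < n) :
    min 1 (10 / (ξ * n)) ≤ 1 / ξ * (C / n) ^ (1 / C) := by
  have hC₀ : 0 < C := by linarith
  rcases le_total n C with hnC | hCn
  · have hrpow : 1 ≤ (C / n) ^ (1 / C) :=
      Real.one_le_rpow ((one_le_div hn).mpr hnC) (by positivity)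
    exact (min_le_left _ _).trans (one_le_mul_of_one_le_of_one_le ((one_le_div hξ).mpr hξ1) hrpow)
  · calc min 1 (10 / (ξ * n)) ≤ 10 / (ξ * n) := min_le_right _ _
      _ = 1 / ξ * (10 / n) := by ring
      _ ≤ 1 / ξ * (C / n) := by gcongr
      _ ≤ 1 / ξ * (C / n) ^ (1 / C) := by
        gcongr
        exact Real.self_le_rpow_of_le_one (by positivity) ((div_le_one hn).mpr hCn)
          ((div_le_one hC₀).mpr (by linarith))

theorem main_lemma_EH_general {V : Type} [Fintype V] [DecidableEq V] {E : Finset (Finset V)}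
    {β : ℝ} (hβ : 0 < β) (hE : ∀ e ∈ E, #e = 3) (hD : InducedD2Free E) (hβE : β ≤ densH E)
    (hEβ : densH E ≤ 1 - β) :
    ∃ X Y S : Finset V,
      Disjoint X Y ∧ Disjoint X S ∧ Disjoint Y S ∧ X ∪ Y ∪ S = univ ∧
      β ^ 2 / 16 * Fintype.card V / 10 ≤ (#X : ℝ) ∧
      β ^ 2 / 16 * Fintype.card V / 10 ≤ (#Y : ℝ) ∧
      (#S : ℝ) ≤ β ^ 2 / 16 * Fintype.card V / 2 ∧
      EpsHomogeneous E X Y (min 1 (10 / (β ^ 2 / 16 * Fintype.card V))) := by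
  obtain ⟨X, Y, hXY, hhom⟩ := exists_isLargePair_epsHomogeneous hβ (fun _ => hE _) hD hβE hEβ
  exact ⟨X, Y, (X ∪ Y)ᶜ, hXY.disjoint,
    disjoint_compl_right.mono_left subset_union_left,
    disjoint_compl_right.mono_left subset_union_right,
    union_compl _, hXY.le_card_left, hXY.le_card_right, hXY.card_compl_union_le, hhom⟩

/-- An induced `D₂`-free hypergraph with density bounded away from 0 and 1 admits an
`ε`-homogeneous partition with `ξ = β²/16` and `ε = (1/ξ)·(C/n)^(1/C)`. -/
theorem main_lemma_EH :
    ∃ C₀ : ℝ, C₀ > 1 ∧ ∀ C : ℝ, C > C₀ →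
      ∀ (V : Type) [Fintype V] [DecidableEq V] (E : Finset (Finset V)) (β : ℝ),
        0 < β →
        (∀ e ∈ E, e.card = 3) →
        InducedD2Free E →
        (Fintype.card V : ℝ) ≥ 4 / β →
        β ≤ densH E →
        densH E ≤ 1 - β →
        ∃ X Y S : Finset V,
          Disjoint X Y ∧ Disjoint X S ∧ Disjoint Y S ∧
          X ∪ Y ∪ S = Finset.univ ∧
          (X.card : ℝ) ≥ (β ^ 2 / 16) * (Fintype.card V : ℝ) / 10 ∧
          (Y.card : ℝ) ≥ (β ^ 2 / 16) * (Fintype.card V : ℝ) / 10 ∧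
          (S.card : ℝ) ≤ (β ^ 2 / 16) * (Fintype.card V : ℝ) / 2 ∧
          EpsHomogeneous E X Y
            ((1 / (β ^ 2 / 16)) * (C / (Fintype.card V : ℝ)) ^ (1 / C)) := by
  refine ⟨10, by norm_num, fun C hC V _ _ E β hβ hE hD hn hβE hEβ => ?_⟩
  obtain ⟨X, Y, S, hXY, hXS, hYS, hunion, hX, hY, hS, hhom⟩ :=
    main_lemma_EH_general hβ hE hD hβE hEβ
  have hξ : β ^ 2 / 16 ≤ 1 := by nlinarith
  have hn₀ : (0 : ℝ) < Fintype.card V := (div_pos four_pos hβ).trans_le hn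
  exact ⟨X, Y, S, hXY, hXS, hYS, hunion, hX, hY, hS,
    hhom.mono (min_one_div_le_mul_rpow hC.le (by positivity) hξ hn₀)⟩
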